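/- arXiv:1606.09389 — 2 statements merged into one kernel-verified Lean document; each statement's English description precedes it below -/
import Mathlib

section
/- For any positive integers n₁, n₂, …, n_r (r ≥ 2), the complete multipartite graph K_{n₁,n₂,…,n_r} has a cyclic interval n-coloring, where n = n₁ + n₂ + ⋯ + n_r is the total number of vertices. -/
open SimpleGraph

/-- The set of colors appearing on edges incident to `v` under the edge coloring `c`. -/
def colorsAt {V : Type*} (G : SimpleGraph V) (c : Sym2 V → ℕ) (v : V) : Set ℕ :=
  c '' (G.incidenceSet v)

/-- A set of natural numbers is an interval of consecutive integers. -/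
def IsIntervalSet (S : Set ℕ) : Prop := ∃ a b : ℕ, S = Set.Icc a b

/-- A proper edge coloring of `G` with colors `1, …, t`: every edge gets a color in
`{1, …, t}` and distinct edges sharing a vertex get distinct colors. -/
def IsProperEdgeColoring {V : Type*} (G : SimpleGraph V) (t : ℕ) (c : Sym2 V → ℕ) : Prop :=
  (∀ e ∈ G.edgeSet, c e ∈ Set.Icc 1 t) ∧
  ∀ e₁ ∈ G.edgeSet, ∀ e₂ ∈ G.edgeSet, e₁ ≠ e₂ → (∃ v, v ∈ e₁ ∧ v ∈ e₂) → c e₁ ≠ c e₂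

/-- A cyclic interval `t`-coloring of `G`: a proper edge coloring with colors `1, …, t`
such that at every vertex the set of incident colors, or its complement in `{1, …, t}`,
is an interval of consecutive integers. -/
def IsCyclicIntervalColoring {V : Type*} (G : SimpleGraph V) (t : ℕ) (c : Sym2 V → ℕ) : Prop :=
  IsProperEdgeColoring G t c ∧
  ∀ v : V, IsIntervalSet (colorsAt G c v) ∨ IsIntervalSet (Set.Icc 1 t \ colorsAt G c v)

/-!
Number the vertices of a complete multipartite graph by `0, …, n - 1` so that each part is a block
of consecutive numbers, and give the edge `uv` the color `(u + v) mod n`, shifted to `{1, …, n}`.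
Cyclically, the neighbors of `v` form an arc, the complement of the block of `v`. The colors at `v`
are this arc rotated by `v`, and an arc of `{0, …, n - 1}` or its complement is an interval.
-/

section CyclicArc

variable {N : ℕ}

/-- The arc of `m` consecutive elements of the cycle `ℤ/N`, starting at `a`, its elements being
represented by the natural numbers `0, …, N - 1`. -/
def cyclicArc (N a m : ℕ) : Set ℕ :=
  (fun i => (a + i) % N) '' Set.Iio m

theorem cyclicArc_subset_Iio (hN : 0 < N) (a m : ℕ) : cyclicArc N a m ⊆ Set.Iio N := by
  rintro _ ⟨i, -, rfl⟩
  exact Nat.mod_lt _ hN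

theorem image_add_mod_cyclicArc (q a m : ℕ) :
    (fun x => (q + x) % N) '' cyclicArc N a m = cyclicArc N (q + a) m := by
  simp only [cyclicArc, Set.image_image, Nat.add_mod_mod, Nat.add_assoc]

theorem cyclicArc_mod (a m : ℕ) : cyclicArc N (a % N) m = cyclicArc N a m := by
  simp only [cyclicArc, Nat.mod_add_mod]

theorem cyclicArc_eq_Ico {a m : ℕ} (h : a + m ≤ N) : cyclicArc N a m = Set.Ico a (a + m) := by
  ext k
  constructor
  · rintro ⟨i, hi : i < m, rfl⟩
    have : a + i < a + m := Nat.add_lt_add_left hi a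
    simp only [Nat.mod_eq_of_lt (this.trans_le h), Set.mem_Ico, Nat.le_add_right, this, and_self]
  · rintro ⟨hak, hkm⟩
    refine ⟨k - a, Nat.sub_lt_left_of_lt_add hak hkm, ?_⟩
    simp only [Nat.add_sub_cancel' hak, Nat.mod_eq_of_lt (hkm.trans_le h)]

theorem Iio_diff_cyclicArc {a m : ℕ} (ha : a ≤ N) (h : N ≤ a + m) :
    Set.Iio N \ cyclicArc N a m = Set.Ico (a + m - N) a := by
  ext k
  constructor
  · rintro ⟨hkN : k < N, hk⟩
    by_contra hIco
    rw [Set.mem_Ico, not_and_or, not_le, not_lt] at hIco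
    refine hk ?_
    rcases hIco with hwrap | hak
    · refine ⟨k + N - a, Set.mem_Iio.2 (by omega), ?_⟩
      have : a + (k + N - a) = k + N := by omega
      simp only [this, Nat.add_mod_right, Nat.mod_eq_of_lt hkN]
    · refine ⟨k - a, Set.mem_Iio.2 (by omega), ?_⟩
      simp only [Nat.add_sub_cancel' hak, Nat.mod_eq_of_lt hkN]
  · rintro ⟨hmk, hka⟩
    refine ⟨hka.trans_le ha, ?_⟩
    rintro ⟨i, hi : i < m, hik : (a + i) % N = k⟩
    have hwrap : N ≤ a + i := by
      by_contra! hlt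
      rw [Nat.mod_eq_of_lt hlt] at hik
      omega
    have : k ≤ a + i - N := by
      rw [← hik, Nat.mod_eq_sub_mod hwrap]
      exact Nat.mod_le _ _
    omega

end CyclicArc

section IntervalSet

variable {N : ℕ}

theorem isIntervalSet_Ico (a b : ℕ) : IsIntervalSet (Set.Ico a b) := by
  rcases lt_or_ge a b with h | h
  · exact ⟨a, b - 1, by ext; simp only [Set.mem_Ico, Set.mem_Icc]; omega⟩
  · exact ⟨1, 0, by simp [h]⟩

theorem IsIntervalSet.image_add_one {s : Set ℕ} (hs : IsIntervalSet s) :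
    IsIntervalSet ((· + 1) '' s) := by
  obtain ⟨a, b, rfl⟩ := hs
  exact ⟨a + 1, b + 1, Set.image_add_const_Icc 1 a b⟩

theorem isIntervalSet_image_val_of_ordConnected {s : Set (Fin N)} (hs : s.OrdConnected) :
    IsIntervalSet (Fin.val '' s) := by
  rcases s.eq_empty_or_nonempty with rfl | hne
  · exact ⟨1, 0, by simp⟩
  obtain ⟨a, ha, ha_le⟩ := s.exists_min_image id s.toFinite hne
  obtain ⟨b, hb, le_hb⟩ := s.exists_max_image id s.toFinite hne
  have hIcc : s = Set.Icc a b :=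
    Set.Subset.antisymm (fun x hx => ⟨ha_le x hx, le_hb x hx⟩) (hs.out ha hb)
  exact ⟨a, b, by rw [hIcc, Fin.image_val_Icc]⟩

theorem isIntervalSet_cyclicArc_or_diff (hN : 0 < N) (a m : ℕ) :
    IsIntervalSet (cyclicArc N a m) ∨ IsIntervalSet (Set.Iio N \ cyclicArc N a m) := by
  rw [← cyclicArc_mod]
  rcases le_total (a % N + m) N with h | h
  · exact .inl (cyclicArc_eq_Ico h ▸ isIntervalSet_Ico _ _)
  · exact .inr (Iio_diff_cyclicArc (Nat.mod_lt a hN).le h ▸ isIntervalSet_Ico _ _)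

theorem IsIntervalSet.exists_Iio_diff_eq_cyclicArc {s : Set ℕ} (hs : IsIntervalSet s)
    (hsN : s ⊆ Set.Iio N) : ∃ a m, Set.Iio N \ s = cyclicArc N a m := by
  obtain ⟨a, b, rfl⟩ := hs
  rcases lt_or_ge b a with hba | hab
  · refine ⟨0, N, ?_⟩
    rw [cyclicArc_eq_Ico (Nat.zero_add N).le, Set.Icc_eq_empty hba.not_ge]
    ext
    simp
  · have hbN : b < N := hsN ⟨hab, le_rfl⟩
    have hcompl : Set.Iio N \ cyclicArc N (b + 1) (N + a - (b + 1)) = Set.Icc a b := by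
      rw [Iio_diff_cyclicArc hbN (by omega)]
      ext
      simp only [Set.mem_Ico, Set.mem_Icc]
      omega
    refine ⟨b + 1, N + a - (b + 1), ?_⟩
    rw [← hcompl, Set.sdiff_sdiff_cancel_left (cyclicArc_subset_Iio (Nat.zero_lt_of_lt hbN) _ _)]

end IntervalSet

section CyclicSumColoring

variable {V : Type*} {G : SimpleGraph V} {N : ℕ}

/-- The edge coloring induced by a labelling `p` of the vertices by `0, …, N - 1`: the color of an
edge is the sum of the labels of its ends modulo `N`, shifted by one so that the colors are
`1, …, N`. -/
def cyclicSumColoring (p : V → Fin N) : Sym2 V → ℕ :=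
  Sym2.lift ⟨fun u v => ((p u : ℕ) + p v) % N + 1, fun u v => by simp only [Nat.add_comm]⟩

theorem cyclicSumColoring_mk (p : V → Fin N) (u v : V) :
    cyclicSumColoring p s(u, v) = ((p u : ℕ) + p v) % N + 1 :=
  rfl

theorem isProperEdgeColoring_cyclicSumColoring (G : SimpleGraph V) {p : V → Fin N}
    (hp : p.Injective) : IsProperEdgeColoring G N (cyclicSumColoring p) := by
  constructor
  · intro e _
    induction e with | _ u v
    exact ⟨Nat.le_add_left _ _, Nat.mod_lt _ (p u).pos⟩
  · rintro _ - _ - hne ⟨v, ⟨a, rfl⟩, ⟨b, rfl⟩⟩ heq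
    rw [cyclicSumColoring_mk, cyclicSumColoring_mk] at heq
    have hmod : (p v : ℕ) + p a ≡ p v + p b [MOD N] := Nat.succ_injective heq
    have hab : a = b :=
      hp (Fin.ext ((hmod.add_left_cancel' _).eq_of_lt_of_lt (p a).isLt (p b).isLt))
    exact hne (hab ▸ rfl)

theorem colorsAt_eq_image_neighborSet (G : SimpleGraph V) (c : Sym2 V → ℕ) (v : V) :
    colorsAt G c v = (fun w => c s(v, w)) '' G.neighborSet v := by
  ext k
  constructor
  · rintro ⟨_, ⟨hadj, w, rfl⟩, rfl⟩
    exact ⟨w, hadj, rfl⟩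
  · rintro ⟨w, hadj, rfl⟩
    exact ⟨s(v, w), G.mk'_mem_incidenceSet_left_iff.2 hadj, rfl⟩

theorem colorsAt_cyclicSumColoring {p : V → Fin N} {v : V} {a m : ℕ}
    (h : (fun w => (p w : ℕ)) '' G.neighborSet v = cyclicArc N a m) :
    colorsAt G (cyclicSumColoring p) v = (· + 1) '' cyclicArc N (p v + a) m := by
  simp only [← image_add_mod_cyclicArc, ← h, colorsAt_eq_image_neighborSet, Set.image_image,
    cyclicSumColoring_mk]

theorem isCyclicIntervalColoring_cyclicSumColoring {p : V → Fin N} (hp : p.Injective)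
    (h : ∀ v, ∃ a m, (fun w => (p w : ℕ)) '' G.neighborSet v = cyclicArc N a m) :
    IsCyclicIntervalColoring G N (cyclicSumColoring p) := by
  refine ⟨isProperEdgeColoring_cyclicSumColoring G hp, fun v => ?_⟩
  obtain ⟨a, m, hv⟩ := h v
  have hIcc : Set.Icc 1 N = (· + 1) '' Set.Iio N := by
    ext k
    simp only [Set.mem_Icc, Set.mem_image, Set.mem_Iio]
    exact ⟨fun hk => ⟨k - 1, by omega, by omega⟩, by rintro ⟨x, hx, rfl⟩; omega⟩
  rw [colorsAt_cyclicSumColoring hv, hIcc, ← Set.image_sdiff (add_left_injective 1)]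
  exact (isIntervalSet_cyclicArc_or_diff (p v).pos _ m).imp .image_add_one .image_add_one

theorem isCyclicIntervalColoring_of_isIntervalSet_compl_neighborSet (p : V ≃ Fin N)
    (h : ∀ v, IsIntervalSet ((fun w => (p w : ℕ)) '' (G.neighborSet v)ᶜ)) :
    IsCyclicIntervalColoring G N (cyclicSumColoring p) := by
  refine isCyclicIntervalColoring_cyclicSumColoring p.injective fun v => ?_
  have hrange : Set.range (fun w => (p w : ℕ)) = Set.Iio N := by
    rw [← Fin.range_val, ← p.surjective.range_comp]
    rfl
  obtain ⟨a, m, ham⟩ := (h v).exists_Iio_diff_eq_cyclicArc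
    ((Set.image_subset_range _ _).trans_eq hrange)
  have hinj : Function.Injective fun w => (p w : ℕ) := Fin.val_injective.comp p.injective
  exact ⟨a, m, by rw [← ham, ← hrange, Set.range_sdiff_image hinj, compl_compl]⟩

end CyclicSumColoring

section CompleteMultipartite

variable {V : Type*} [Fintype V]

theorem exists_equiv_fin_monotone_comp_symm {α : Type*} [LinearOrder α] (f : V → α) :
    ∃ p : V ≃ Fin (Fintype.card V), Monotone (f ∘ p.symm) :=
  let e := Fintype.equivFin V
  ⟨e.trans (Tuple.sort (f ∘ e.symm)).symm, Tuple.monotone_sort (f ∘ e.symm)⟩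

theorem exists_equiv_fin_isIntervalSet_compl_neighborSet {G : SimpleGraph V}
    (hG : G.IsCompleteMultipartite) :
    ∃ p : V ≃ Fin (Fintype.card V),
      ∀ v, IsIntervalSet ((fun w => (p w : ℕ)) '' (G.neighborSet v)ᶜ) := by
  let part : V → Quotient hG.setoid := Quotient.mk hG.setoid
  let : LinearOrder (Quotient hG.setoid) := WellOrderingRel.isWellOrder.linearOrder
  obtain ⟨p, hp⟩ := exists_equiv_fin_monotone_comp_symm part
  refine ⟨p, fun v => ?_⟩
  have hpart : (G.neighborSet v)ᶜ = part ⁻¹' {part v} := by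
    ext w
    rw [Set.mem_preimage, Set.mem_singleton_iff, eq_comm]
    exact (Quotient.eq (r := hG.setoid)).symm
  have himage : p '' (G.neighborSet v)ᶜ = (part ∘ p.symm) ⁻¹' {part v} := by
    rw [hpart, p.image_eq_preimage_symm, Set.preimage_comp]
  have hconn : (p '' (G.neighborSet v)ᶜ).OrdConnected :=
    himage ▸ Set.ordConnected_singleton.preimage_mono hp
  simpa only [Set.image_image] using isIntervalSet_image_val_of_ordConnected hconn

theorem stmt_13_general (G : SimpleGraph V) (hG : G.IsCompleteMultipartite) :
    ∃ c : Sym2 V → ℕ, IsCyclicIntervalColoring G (Fintype.card V) c := by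
  obtain ⟨p, hp⟩ := exists_equiv_fin_isIntervalSet_compl_neighborSet hG
  exact ⟨_, isCyclicIntervalColoring_of_isIntervalSet_compl_neighborSet p hp⟩

end CompleteMultipartite

/-- for positive integers `n₁, …, n_r` (`r ≥ 2`), the complete multipartite
graph `K_{n₁,…,n_r}` has a cyclic interval `n`-coloring, where `n = n₁ + ⋯ + n_r`. -/
theorem stmt_13 (r : ℕ) (hr : 2 ≤ r) (n : Fin r → ℕ) (hn : ∀ i, 0 < n i) :
    ∃ c : Sym2 (Σ i : Fin r, Fin (n i)) → ℕ,
      IsCyclicIntervalColoring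
        (SimpleGraph.completeMultipartiteGraph (fun i : Fin r => Fin (n i))) (∑ i, n i) c := by
  simpa only [Fintype.card_sigma, Fintype.card_fin] using
    stmt_13_general _ (completeMultipartiteGraph.isCompleteMultipartite fun i => Fin (n i))
end

section
/- Let G be a finite graph and let d be a positive integer such that d divides the degree of every vertex of G but d does not divide the number of edges of G. Then for every positive integer k, G has no cyclic interval (d·k)-coloring. -/
open SimpleGraph

/-!
A block of consecutive integers whose length is divisible by `d` meets every residue class mod `d`
equally often; if `d ∣ t`, so does the complement of such a block in `{1, …, t}`. Since `d` divides
the degrees, at each vertex of a cyclic interval coloring the colors `≡ r (mod d)` make up exactly a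
fraction `1 / d` of the colors present. Summing over the vertices counts every edge
twice, so exactly `|E(G)| / d` edges have such a color, which forces `d ∣ |E(G)|`.
-/

open scoped Finset

/-- A finite set of naturals is equidistributed modulo `d` if each residue class modulo `d`
contains a fraction `1 / d` of its elements. The fraction is cleared to avoid natural-number
division; for `d = 0` only the empty set qualifies. -/
def EquidistributedMod (d : ℕ) (S : Finset ℕ) : Prop :=
  ∀ r, d * #{x ∈ S | x ≡ r [MOD d]} = #S

lemma card_filter_modEq_Ico_add_mul {d : ℕ} (hd : 0 < d) (a m r : ℕ) :
    #{x ∈ Finset.Ico a (a + d * m) | x ≡ r [MOD d]} = m := by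
  have hd' : (d : ℚ) ≠ 0 := by positivity
  have hshift : ((a + d * m : ℕ) - r : ℚ) / d = (a - r) / d + m := by
    push_cast
    field_simp
    ring
  zify
  rw [Nat.Ico_filter_modEq_card _ _ hd, hshift, Int.ceil_add_natCast, add_sub_cancel_left,
    max_eq_left m.cast_nonneg]

namespace EquidistributedMod

variable {d : ℕ} {S T : Finset ℕ}

lemma sdiff (hT : EquidistributedMod d T) (hS : EquidistributedMod d S) (hST : S ⊆ T) :
    EquidistributedMod d (T \ S) := by
  intro r
  have hclass : {x ∈ T \ S | x ≡ r [MOD d]} =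
      {x ∈ T | x ≡ r [MOD d]} \ {x ∈ S | x ≡ r [MOD d]} := by grind
  rw [hclass, Finset.card_sdiff_of_subset (Finset.filter_subset_filter _ hST),
    Finset.card_sdiff_of_subset hST, Nat.mul_sub, hT r, hS r]

lemma mul_card_filter_of_injOn {ι : Type*} {E : Finset ι} {f : ι → ℕ}
    (h : EquidistributedMod d (E.image f)) (hf : Set.InjOn f E) (r : ℕ) :
    d * #{e ∈ E | f e ≡ r [MOD d]} = #E := by
  rw [← Finset.card_image_of_injOn hf, ← h r, Finset.filter_image, Finset.card_image_of_injOn]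
  exact hf.mono (Finset.coe_subset.2 (Finset.filter_subset _ _))

end EquidistributedMod

lemma equidistributedMod_Icc {d a b : ℕ} (h : d ∣ #(Finset.Icc a b)) :
    EquidistributedMod d (Finset.Icc a b) := by
  intro r
  obtain rfl | hd := d.eq_zero_or_pos
  · rw [zero_mul, zero_dvd_iff.1 h]
  obtain ⟨m, hm⟩ := h
  have hIco : Finset.Icc a b = Finset.Ico a (a + d * m) := by
    rw [Nat.card_Icc] at hm
    grind
  rw [hm, hIco, card_filter_modEq_Ico_add_mul hd]

lemma IsIntervalSet.equidistributedMod {d : ℕ} {S : Finset ℕ} (hS : IsIntervalSet S)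
    (hd : d ∣ #S) : EquidistributedMod d S := by
  obtain ⟨a, b, hab⟩ := hS
  obtain rfl : S = Finset.Icc a b := Finset.coe_injective (by rw [hab, Finset.coe_Icc])
  exact equidistributedMod_Icc hd

lemma equidistributedMod_of_isIntervalSet_sdiff {d t : ℕ} {S : Finset ℕ} (ht : d ∣ t)
    (hSt : S ⊆ Finset.Icc 1 t) (hS : IsIntervalSet (Set.Icc 1 t \ S)) (hd : d ∣ #S) :
    EquidistributedMod d S := by
  have hcard : d ∣ #(Finset.Icc 1 t) := by simpa using ht
  have hdcompl : d ∣ #(Finset.Icc 1 t \ S) := by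
    rw [Finset.card_sdiff_of_subset hSt]
    exact Nat.dvd_sub hcard hd
  have hcompl : EquidistributedMod d (Finset.Icc 1 t \ S) :=
    IsIntervalSet.equidistributedMod
      (by simpa only [Finset.coe_sdiff, Finset.coe_Icc] using hS) hdcompl
  rw [← Finset.sdiff_sdiff_eq_self hSt]
  exact (equidistributedMod_Icc hcard).sdiff hcompl Finset.sdiff_subset

section DoubleCounting

variable {V : Type*} [DecidableEq V] {E : Finset (Sym2 V)}

lemma sum_card_filter_mem_eq_two_mul_card [Fintype V] (hE : ∀ e ∈ E, ¬ e.IsDiag) :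
    ∑ v, #{e ∈ E | v ∈ e} = 2 * #E := by
  have hends : ∀ e ∈ E, #{v | v ∈ e} = 2 := fun e he ↦ by
    rw [← e.card_toFinset_of_not_isDiag (hE e he)]
    congr 1
    ext v
    simp
  calc ∑ v, #{e ∈ E | v ∈ e}
      = ∑ e ∈ E, #{v | v ∈ e} :=
        Finset.sum_card_bipartiteAbove_eq_sum_card_bipartiteBelow fun v e ↦ v ∈ e
    _ = 2 * #E := by rw [Finset.sum_const_nat hends, mul_comm]

lemma mul_card_filter_eq_card_of_forall_vertex [Finite V] {p : Sym2 V → Prop} [DecidablePred p]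
    {d : ℕ} (hE : ∀ e ∈ E, ¬ e.IsDiag)
    (hp : ∀ v, d * #{e ∈ {e ∈ E | v ∈ e} | p e} = #{e ∈ E | v ∈ e}) :
    d * #{e ∈ E | p e} = #E := by
  have := Fintype.ofFinite V
  refine Nat.eq_of_mul_eq_mul_left two_pos ?_
  calc 2 * (d * #{e ∈ E | p e})
      = d * ∑ v, #{e ∈ {e ∈ E | p e} | v ∈ e} := by
        rw [sum_card_filter_mem_eq_two_mul_card fun e he ↦ hE e (Finset.mem_filter.1 he).1,
          mul_left_comm]
    _ = ∑ v, #{e ∈ E | v ∈ e} := by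
        rw [Finset.mul_sum]
        exact Finset.sum_congr rfl fun v _ ↦ by rw [Finset.filter_comm, hp v]
    _ = 2 * #E := sum_card_filter_mem_eq_two_mul_card hE

end DoubleCounting

section Coloring

variable {V : Type*} {G : SimpleGraph V} {t d : ℕ} {c : Sym2 V → ℕ}

lemma IsProperEdgeColoring.injOn_incidenceSet (hc : IsProperEdgeColoring G t c) (v : V) :
    Set.InjOn c (G.incidenceSet v) := by
  intro e he f hf hef
  by_contra hne
  exact hc.2 e he.1 f hf.1 hne ⟨v, he.2, hf.2⟩ hef

lemma IsProperEdgeColoring.colorsAt_subset (hc : IsProperEdgeColoring G t c) (v : V) :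
    colorsAt G c v ⊆ Set.Icc 1 t :=
  Set.image_subset_iff.2 fun e he ↦ hc.1 e he.1

lemma coe_image_incidenceFinset [DecidableEq V] (v : V) [Fintype (G.neighborSet v)] :
    ((G.incidenceFinset v).image c : Set ℕ) = colorsAt G c v := by
  rw [Finset.coe_image, coe_incidenceFinset, colorsAt]

lemma IsCyclicIntervalColoring.equidistributedMod_image [DecidableEq V]
    (hc : IsCyclicIntervalColoring G t c) (ht : d ∣ t) (v : V) [Fintype (G.neighborSet v)]
    (hv : d ∣ G.degree v) :
    EquidistributedMod d ((G.incidenceFinset v).image c) := by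
  have hinj : Set.InjOn c (G.incidenceFinset v) := by
    simpa only [coe_incidenceFinset] using hc.1.injOn_incidenceSet v
  have hsub : (G.incidenceFinset v).image c ⊆ Finset.Icc 1 t := by
    rw [← Finset.coe_subset, coe_image_incidenceFinset, Finset.coe_Icc]
    exact hc.1.colorsAt_subset v
  have hcard : d ∣ #((G.incidenceFinset v).image c) := by
    rwa [Finset.card_image_of_injOn hinj, card_incidenceFinset_eq_degree]
  have hcyclic := hc.2 v
  rw [← coe_image_incidenceFinset] at hcyclic
  exact hcyclic.elim (·.equidistributedMod hcard)
    (equidistributedMod_of_isIntervalSet_sdiff ht hsub · hcard)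

lemma IsCyclicIntervalColoring.mul_card_filter_modEq [Fintype V] [DecidableRel G.Adj]
    (hc : IsCyclicIntervalColoring G t c) (ht : d ∣ t) (hdeg : ∀ v, d ∣ G.degree v) (r : ℕ) :
    d * #{e ∈ G.edgeFinset | c e ≡ r [MOD d]} = #G.edgeFinset := by
  classical
  refine mul_card_filter_eq_card_of_forall_vertex
    (fun e he ↦ G.not_isDiag_of_mem_edgeFinset he) fun v ↦ ?_
  rw [← incidenceFinset_eq_filter]
  refine (hc.equidistributedMod_image ht v (hdeg v)).mul_card_filter_of_injOn ?_ r
  simpa only [coe_incidenceFinset] using hc.1.injOn_incidenceSet v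

end Coloring

/-- if `d` divides the degree of every vertex of `G` but does not divide the
number of edges of `G`, then `G` has no cyclic interval `d·k`-coloring for any `k ≥ 1`. -/
theorem stmt_14 {V : Type*} [Fintype V] [DecidableEq V] (G : SimpleGraph V)
    [DecidableRel G.Adj] (d : ℕ) (hd : 0 < d)
    (hdvd : ∀ v : V, d ∣ G.degree v) (hnd : ¬ d ∣ G.edgeFinset.card) :
    ∀ k : ℕ, 0 < k → ¬ ∃ c : Sym2 V → ℕ, IsCyclicIntervalColoring G (d * k) c := by
  rintro k - ⟨c, hc⟩
  exact hnd (Dvd.intro _ (hc.mul_card_filter_modEq (dvd_mul_right d k) hdvd 0))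
end
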